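/- Let $p$ be a prime, let $G$ be a finite group of order $p^n$, and let $\chi$ be a non-linear irreducible complex character of $G$ (so necessarily $n \ge 3$). Then $\chi$ vanishes at at least $p^n - p^{n-1} + p^2 - p$ elements of $G$. Suppose that $\chi$ vanishes at exactly $p^n - p^{n-1} + p^2 - p$ elements of $G$. Then $\chi$ is faithful (that is, $\chi(g) = \chi(1)$ only for $g = 1$), $\chi(1) = p$, the center $Z(G)$ has order $p$, and $G$ is of maximal class, that is, nilpotent of class $n-1$. Let $Z_2(G)$ denote the second center, defined by $Z_2(G)/Z(G) = Z(G/Z(G))$. If $n > 3$, then $Z_2(G)$ has order $p^2$. Moreover, there is an abelian subgroup $U$ of index $p$ in $G$ such that the set of zeros of $\chi$ is exactly $(G - U) \cup (Z_2(G) - Z(G))$ and such that, if $n > 3$, $U$ is the unique maximal subgroup of $G$ having a character $\theta$ with induced character $\theta^G = \chi$. -/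

import Mathlib

open CategoryTheory

/-- `χ` is the character of a finite-dimensional complex representation of `G`. -/
def IsComplexCharacter {G : Type*} [Group G] (χ : G → ℂ) : Prop :=
  ∃ V : FDRep ℂ G, V.character = χ

/-- `χ ∈ Irr(G)`: the character of an irreducible complex representation of `G`. -/
def IsIrrCharacter {G : Type*} [Group G] (χ : G → ℂ) : Prop :=
  ∃ V : FDRep ℂ G, Simple V ∧ V.character = χ

/-- `χ` is faithful: the kernel `{g | χ g = χ 1}` is trivial. -/
def IsFaithfulCharacter {G : Type*} [Group G] (χ : G → ℂ) : Prop :=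
  {g : G | χ g = χ 1} = {1}

open Classical in
/-- The induced class function `θ^G (g) = |H|⁻¹ ∑_{x ∈ G} θ°(x g x⁻¹)`, where `θ°` is `θ` on `H`
and `0` outside `H`. -/
noncomputable def inducedCharacter {G : Type*} [Group G] [Fintype G] (H : Subgroup G)
    (θ : H → ℂ) (g : G) : ℂ :=
  (Nat.card H : ℂ)⁻¹ * ∑ x : G, if h : x * g * x⁻¹ ∈ H then θ ⟨x * g * x⁻¹, h⟩ else 0

/-- `H` has a character that induces `χ`. -/
def IsInducedFrom {G : Type*} [Group G] [Fintype G] (χ : G → ℂ) (H : Subgroup G) : Prop :=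
  ∃ θ : H → ℂ, IsComplexCharacter θ ∧ inducedCharacter H θ = χ

/-- For a group `G` of order `p ^ n`: `G` is of maximal class, i.e. nilpotent of class `n - 1`. -/
def HasMaximalClass (G : Type*) [Group G] (n : ℕ) : Prop :=
  ∃ _ : Group.IsNilpotent G, Group.nilpotencyClass G + 1 = n

/-!
Passing to `G ⧸ ker ρ` divides the number of zeros by `|ker ρ|`, so assume that `ρ` is faithful and
hence that `Z(G)` is cyclic. Choose `g ∈ Z₂(G) \ Z(G)` with `g ^ p ∈ Z(G)`; its centralizer `C`
has index `p`. If `⁅y, x⁆` is central and nontrivial, it acts by a scalar `ω ≠ 1`, and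
`χ(x) = χ(y x y⁻¹) = ω χ(x)` forces `χ(x) = 0`. Thus `χ` vanishes off `C` and on `Z₂(G) \ Z(G)`,
which is the bound.

Equality forces `|Z(G)| = p`, `|C ∩ Z₂(G)| = p²` and the absence of further zeros. If `C` were not
abelian, nilpotency would give `a, b ∈ C` with `⁅a, b⁆` central and nontrivial; both would be zeros
in `C`, hence lie in `C ∩ Z₂(G)`, which is abelian of order `p²`. So `C` is abelian, and the
`G`-translates of a common eigenvector of `C` form a basis that exhibits `ρ` as induced from `C`.
For `x ∉ C` the homomorphism `c ↦ ⁅x, c⁆` on `C` has kernel `Z(G)` and maps `C ∩ Zᵢ₊₁(G)` into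
`C ∩ Zᵢ(G)`, so `|C ∩ Zᵢ(G)| ≤ p ^ i` and `G` has maximal class. A character induced from a
maximal subgroup `M` vanishes off `M`, so `C ⊆ Z₂(G) ∪ M`, which gives `M = C` once `|C| > p²`.
-/

open scoped commutatorElement

section GroupTheory

variable {G : Type*} [Group G]

/-- The map `y ↦ ⁅x, y⁆` on a subgroup `C`. It is multiplicative because
`⁅x, a * b⁆ = ⁅x, a⁆ * (a * ⁅x, b⁆ * a⁻¹)` and `C` commutes with its values. -/
def commutatorHom (x : G) (C : Subgroup G) (hx : ∀ a ∈ C, ∀ b ∈ C, Commute a ⁅x, b⁆) : C →* G where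
  toFun y := ⁅x, (y : G)⁆
  map_one' := commutatorElement_one_right x
  map_mul' a b := by
    rw [Subgroup.coe_mul, commutatorElement_mul_right_eq_mul_conj, mul_assoc ⁅x, (a : G)⁆,
      (hx a a.2 b b.2).eq, ← mul_assoc, mul_inv_cancel_right]

theorem mem_ker_commutatorHom {x : G} {C : Subgroup G}
    (hx : ∀ a ∈ C, ∀ b ∈ C, Commute a ⁅x, b⁆) {y : C} :
    y ∈ (commutatorHom x C hx).ker ↔ Commute x (y : G) :=
  commutatorElement_eq_one_iff_commute

theorem commutatorElement_mem_of_normal {N : Subgroup G} [N.Normal] {k : G} (hk : k ∈ N) (y : G) :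
    ⁅k, y⁆ ∈ N :=
  Subgroup.commutator_le_left N ⊤ (Subgroup.commutator_mem_commutator hk (Subgroup.mem_top y))

theorem exists_mem_notMem_commutatorElement_mem [Group.IsNilpotent G] {N W : Subgroup G} [N.Normal]
    (hNW : ¬ N ≤ W) : ∃ k ∈ N, k ∉ W ∧ ∀ y, ⁅k, y⁆ ∈ W := by
  classical
  have hex : ∃ i, ¬ N ⊓ Subgroup.upperCentralSeries G i ≤ W :=
    ⟨_, by rwa [Subgroup.upperCentralSeries_nilpotencyClass, inf_top_eq]⟩
  obtain ⟨i, hi⟩ : ∃ i, Nat.find hex = i + 1 :=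
    Nat.exists_eq_succ_of_ne_zero fun h0 => by simpa [h0] using Nat.find_spec hex
  obtain ⟨k, ⟨hkN, hki⟩, hkW⟩ := SetLike.not_le_iff_exists.mp (hi ▸ Nat.find_spec hex)
  have hiW : N ⊓ Subgroup.upperCentralSeries G i ≤ W :=
    not_not.mp (Nat.find_min hex (hi ▸ Nat.lt_succ_self i))
  exact ⟨k, hkN, hkW, fun y => hiW ⟨commutatorElement_mem_of_normal hkN y, hki y⟩⟩

theorem exists_commutatorElement_mem_center [Group.IsNilpotent G] {C : Subgroup G} [C.Normal]
    (hC : ¬ IsMulCommutative C) :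
    ∃ k ∈ C, ∃ y ∈ C, ⁅k, y⁆ ∈ Subgroup.center G ∧ ⁅k, y⁆ ≠ 1 := by
  set W := Subgroup.centralizer (C : Set G)
  have commute_of_mem {a w : G} (ha : a ∈ C) (hw : w ∈ W) : Commute a w :=
    Subgroup.mem_centralizer_iff.mp hw a ha
  obtain ⟨k, hkC, hkW, hk⟩ :=
    exists_mem_notMem_commutatorElement_mem (N := C) (W := W) fun hle =>
      hC ⟨⟨fun a b => Subtype.ext (commute_of_mem a.2 (hle b.2))⟩⟩
  let f := commutatorHom k C fun a ha b _ => commute_of_mem ha (hk b)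
  have range_normal : f.range.Normal := by
    refine ⟨?_⟩
    rintro _ ⟨y, rfl⟩ x
    have hyC : x * y * x⁻¹ ∈ C := Subgroup.Normal.conj_mem ‹_› (y : G) y.2 x
    have hxk : ⁅x, k⁆ ∈ W := commutatorElement_inv k x ▸ W.inv_mem (hk x)
    refine ⟨⟨_, hyC⟩, Eq.symm ?_⟩
    calc x * ⁅k, (y : G)⁆ * x⁻¹ = ⁅⁅x, k⁆ * k, x * y * x⁻¹⁆ := by
          rw [conjugate_commutatorElement, ← conj_eq_commutatorElement_mul, MulAut.conj_apply]
      _ = ⁅x, k⁆ * ⁅k, x * y * x⁻¹⁆ * ⁅x, k⁆⁻¹ := by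
          rw [commutatorElement_mul_left_eq_conj_mul, (commute_of_mem hyC hxk).symm.commutator_eq,
            mul_one]
      _ = ⁅k, x * y * x⁻¹⁆ := by
          rw [← (commute_of_mem (commutatorElement_mem_of_normal hkC _) hxk).eq,
            mul_inv_cancel_right]
  have range_ne_bot : ¬ f.range ≤ ⊥ := fun hbot => hkW <| Subgroup.mem_centralizer_iff.mpr
    fun y hy => (commutatorElement_eq_one_iff_commute.mp (hbot ⟨⟨y, hy⟩, rfl⟩)).symm
  obtain ⟨_, ⟨y, rfl⟩, hne, hcen⟩ := exists_mem_notMem_commutatorElement_mem range_ne_bot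
  exact ⟨k, hkC, y, y.2, Subgroup.mem_center_iff.mpr fun x =>
    (commutatorElement_eq_one_iff_commute.mp (hcen x)).symm, hne⟩

theorem exists_mem_upperCentralSeries_two_pow_mem_center [Group.IsNilpotent G] {p : ℕ}
    (hG : IsPGroup p G) (hcomm : ¬ IsMulCommutative G) :
    ∃ g ∈ Subgroup.upperCentralSeries G 2, g ∉ Subgroup.center G ∧ g ^ p ∈ Subgroup.center G := by
  classical
  have hlt : ¬ (⊤ : Subgroup G) ≤ Subgroup.center G := by
    rwa [top_le_iff, Subgroup.center_eq_top_iff]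
  obtain ⟨k, -, hk, hk₂⟩ := exists_mem_notMem_commutatorElement_mem hlt
  have hex : ∃ j, k ^ p ^ j ∈ Subgroup.center G :=
    (hG k).imp fun _ hj => (congrArg (· ∈ Subgroup.center G) hj).mpr (Subgroup.one_mem _)
  obtain ⟨j, hj⟩ : ∃ j, Nat.find hex = j + 1 :=
    Nat.exists_eq_succ_of_ne_zero fun h0 => hk (by simpa [h0] using Nat.find_spec hex)
  refine ⟨k ^ p ^ j, Subgroup.pow_mem _ ?_ _, Nat.find_min hex (hj ▸ j.lt_succ_self), ?_⟩
  · rw [Subgroup.mem_upperCentralSeries_succ_iff, Subgroup.upperCentralSeries_one]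
    exact hk₂
  · rw [← pow_mul, ← pow_succ, ← hj]
    exact Nat.find_spec hex

theorem commutatorElement_mem_center_of_mem {g : G} (hg : g ∈ Subgroup.upperCentralSeries G 2)
    (y : G) : ⁅g, y⁆ ∈ Subgroup.center G :=
  Subgroup.upperCentralSeries_one G ▸ Subgroup.mem_upperCentralSeries_succ_iff.mp hg y

theorem commutatorElement_pow_of_mem_upperCentralSeries_two {g : G}
    (hg : g ∈ Subgroup.upperCentralSeries G 2) (y : G) (m : ℕ) : ⁅g, y⁆ ^ m = ⁅g ^ m, y⁆ := by
  have hy : ∀ a ∈ Subgroup.upperCentralSeries G 2, ∀ b ∈ Subgroup.upperCentralSeries G 2,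
      Commute a ⁅y, b⁆ := fun a _ b hb => by
    rw [← commutatorElement_inv]
    exact Commute.inv_right
      (Subgroup.mem_center_iff.mp (commutatorElement_mem_center_of_mem hb y) a)
  have := map_pow (commutatorHom y _ hy) ⟨g, hg⟩ m
  rw [← commutatorElement_inv y, inv_pow, ← commutatorElement_inv y]
  exact congrArg (·⁻¹) this.symm

theorem index_centralizer_eq_of_isCyclic_center [IsCyclic (Subgroup.center G)] {p : ℕ}
    (hp : p.Prime) {g : G} (hg₂ : g ∈ Subgroup.upperCentralSeries G 2)
    (hg : g ∉ Subgroup.center G) (hgp : g ^ p ∈ Subgroup.center G) :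
    (Subgroup.centralizer {g}).index = p := by
  let f := commutatorHom g ⊤ fun a _ b _ =>
    Subgroup.mem_center_iff.mp (commutatorElement_mem_center_of_mem hg₂ b) a
  have hker : f.ker = (Subgroup.centralizer {g}).subgroupOf ⊤ := by
    ext y
    exact (mem_ker_commutatorHom _).trans <|
      (commute_iff_eq _ _).trans <| eq_comm.trans Subgroup.mem_centralizer_singleton_iff.symm
  have hrange : f.range ≤ Subgroup.center G := by
    rintro _ ⟨y, rfl⟩
    exact commutatorElement_mem_center_of_mem hg₂ y
  have hcyclic : IsCyclic f.range :=
    isCyclic_of_injective (Subgroup.inclusion hrange) (Subgroup.inclusion_injective hrange)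
  have hcard : Nat.card f.range ∣ p := by
    rw [← IsCyclic.exponent_eq_card, Monoid.exponent_dvd_iff_forall_pow_eq_one]
    rintro ⟨_, y, rfl⟩
    have hcomm : Commute (y : G) (g ^ p) := Subgroup.mem_center_iff.mp hgp y
    exact Subtype.ext <| (commutatorElement_pow_of_mem_upperCentralSeries_two hg₂ y p).trans
      hcomm.symm.commutator_eq
  have hne : Nat.card f.range ≠ 1 := fun h => hg <| Subgroup.mem_center_iff.mpr fun y => by
    have hy : ⁅g, y⁆ ∈ f.range := ⟨⟨y, trivial⟩, rfl⟩
    rw [Subgroup.card_eq_one.mp h, Subgroup.mem_bot, commutatorElement_eq_one_iff_mul_comm] at hy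
    exact hy.symm
  calc (Subgroup.centralizer {g}).index = f.ker.index := by
        rw [hker, ← Subgroup.relIndex, Subgroup.relIndex_top_right]
    _ = Nat.card f.range := Subgroup.index_ker f
    _ = p := ((Nat.dvd_prime hp).mp hcard).resolve_left hne

theorem center_le_centralizer_inf {g : G} : Subgroup.center G ≤
    Subgroup.centralizer {g} ⊓ Subgroup.upperCentralSeries G 2 :=
  le_inf (Subgroup.center_le_centralizer _) <| Subgroup.upperCentralSeries_one G ▸
    Subgroup.upperCentralSeries_mono G one_le_two

theorem center_lt_centralizer_inf {g : G} (hg₂ : g ∈ Subgroup.upperCentralSeries G 2)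
    (hg : g ∉ Subgroup.center G) :
    Subgroup.center G < Subgroup.centralizer {g} ⊓ Subgroup.upperCentralSeries G 2 :=
  SetLike.lt_iff_le_and_exists.mpr ⟨center_le_centralizer_inf, g,
    Subgroup.mem_inf.mpr ⟨Subgroup.mem_centralizer_singleton_iff.mpr rfl, hg₂⟩, hg⟩

theorem card_eq_card_div_of_index_eq {C : Subgroup G} {p : ℕ} (hp : p ≠ 0) (hC : C.index = p) :
    Nat.card C = Nat.card G / p := by
  rw [← C.card_mul_index, hC, Nat.mul_div_cancel _ (Nat.pos_of_ne_zero hp)]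

theorem isCoatom_of_prime_index {C : Subgroup G} (hC : C.index.Prime) : IsCoatom C := by
  refine ⟨fun h => hC.ne_one (Subgroup.index_eq_one.mpr h), fun M hCM => ?_⟩
  have hmul := Subgroup.relIndex_mul_index hCM.le
  refine Subgroup.index_eq_one.mp (((Nat.dvd_prime hC).mp (Dvd.intro_left _ hmul)).resolve_right ?_)
  intro hM
  rw [hM, Nat.mul_eq_right hC.ne_zero, Subgroup.relIndex_eq_one] at hmul
  exact hCM.not_ge hmul

section AbelianMaximalSubgroup

variable {C : Subgroup G} [IsMulCommutative C]

theorem mem_center_of_commute_notMem (hco : IsCoatom C) {x k : G} (hx : x ∉ C) (hk : k ∈ C)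
    (hxk : Commute x k) : k ∈ Subgroup.center G := by
  have hle : C ≤ Subgroup.centralizer {k} := fun a ha =>
    Subgroup.mem_centralizer_singleton_iff.mpr (setLike_mul_comm ha hk)
  have htop : Subgroup.centralizer {k} = ⊤ := hco.2 _ <| SetLike.lt_iff_le_and_exists.mpr
    ⟨hle, x, Subgroup.mem_centralizer_singleton_iff.mpr hxk, hx⟩
  exact Subgroup.mem_center_iff.mpr fun y =>
    Subgroup.mem_centralizer_singleton_iff.mp (htop ▸ Subgroup.mem_top y)

theorem card_le_card_mul_card_center [Finite G] [C.Normal] (hco : IsCoatom C) {x : G} (hx : x ∉ C)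
    {K L : Subgroup G} (hKC : K ≤ C) (hKL : ∀ k ∈ K, ⁅x, k⁆ ∈ L) :
    Nat.card K ≤ Nat.card L * Nat.card (Subgroup.center G) := by
  have commutator_mem {b : G} (hb : b ∈ C) : ⁅x, b⁆ ∈ C :=
    commutatorElement_inv b x ▸ C.inv_mem (commutatorElement_mem_of_normal hb x)
  let f := commutatorHom x K fun a ha b hb =>
    setLike_mul_comm (hKC ha) (commutator_mem (hKC hb))
  have hrange : f.range ≤ L := by
    rintro _ ⟨k, rfl⟩
    exact hKL k k.2
  have hker : f.ker.map K.subtype ≤ Subgroup.center G := by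
    rintro _ ⟨k, hk, rfl⟩
    exact mem_center_of_commute_notMem hco hx (hKC k.2) ((mem_ker_commutatorHom _).mp hk)
  calc Nat.card K = Nat.card f.range * Nat.card f.ker := by
        rw [← Subgroup.index_ker, mul_comm, Subgroup.card_mul_index]
    _ = Nat.card f.range * Nat.card (f.ker.map K.subtype) := by
        rw [Subgroup.card_map_of_injective K.subtype_injective]
    _ ≤ Nat.card L * Nat.card (Subgroup.center G) :=
        Nat.mul_le_mul (Subgroup.card_le_of_le hrange) (Subgroup.card_le_of_le hker)

theorem card_inf_upperCentralSeries_le [Finite G] [C.Normal] (hco : IsCoatom C) (i : ℕ) :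
    Nat.card (C ⊓ Subgroup.upperCentralSeries G i : Subgroup G) ≤
      Nat.card (Subgroup.center G) ^ i := by
  obtain ⟨x, -, hx⟩ := SetLike.exists_of_lt hco.lt_top
  induction i with
  | zero => simp
  | succ i ih =>
    refine (card_le_card_mul_card_center hco hx
      (L := C ⊓ Subgroup.upperCentralSeries G i) inf_le_left ?_).trans ?_
    · intro k hk
      rw [← commutatorElement_inv k x]
      exact Subgroup.inv_mem _ ⟨commutatorElement_mem_of_normal hk.1 x, hk.2 x⟩
    · rw [pow_succ]
      exact Nat.mul_le_mul_right _ ih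

theorem card_le_sq_card_center_of_not_upperCentralSeries_two_le [Finite G] [C.Normal]
    (hco : IsCoatom C) (hC : ¬ Subgroup.upperCentralSeries G 2 ≤ C) :
    Nat.card C ≤ Nat.card (Subgroup.center G) ^ 2 := by
  obtain ⟨x, hx₂, hx⟩ := SetLike.not_le_iff_exists.mp hC
  rw [sq]
  exact card_le_card_mul_card_center hco hx le_rfl fun k _ =>
    commutatorElement_mem_center_of_mem hx₂ k

end AbelianMaximalSubgroup

section PGroup

variable [Finite G] {p n : ℕ} [Fact p.Prime]

theorem prime_mul_card_le_card_of_lt (hG : IsPGroup p G) {H K : Subgroup G} (hHK : H < K) :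
    p * Nat.card H ≤ Nat.card K := by
  obtain ⟨m, hm⟩ := (hG.to_subgroup K).index (H.subgroupOf K)
  have hm0 : m ≠ 0 := by
    rintro rfl
    exact hHK.not_ge (Subgroup.relIndex_eq_one.mp (hm.trans (pow_zero p)))
  calc p * Nat.card H ≤ p ^ m * Nat.card (H.subgroupOf K) := by
        rw [Nat.card_congr (Subgroup.subgroupOfEquivOfLe hHK.le).toEquiv]
        exact Nat.mul_le_mul_right _ (Nat.le_self_pow hm0 p)
    _ = Nat.card K := by rw [← hm, Subgroup.index_mul_card]

theorem prime_le_card_center [Nontrivial G] (hG : IsPGroup p G) :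
    p ≤ Nat.card (Subgroup.center G) := by
  have := hG.center_nontrivial
  simpa using prime_mul_card_le_card_of_lt hG
    (bot_lt_iff_ne_bot.mpr ((Subgroup.nontrivial_iff_ne_bot _).mp this))

theorem normal_of_index_eq (hG : IsPGroup p G) {C : Subgroup G} (hC : C.index = p) : C.Normal := by
  have := hG.isNilpotent
  exact Subgroup.NormalizerCondition.normal_of_coatom C
    Group.normalizerCondition_of_isNilpotent (isCoatom_of_prime_index (hC ▸ Fact.out))

theorem nilpotencyClass_lt_of_card_eq_prime_pow [Group.IsNilpotent G] (hG : Nat.card G = p ^ n)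
    (hn : 2 ≤ n) : Group.nilpotencyClass G < n := by
  have hp : p.Prime := Fact.out
  induction n using Nat.strong_induction_on generalizing G with | _ n ih
  by_cases hcomm : IsMulCommutative G
  · have : Group.nilpotencyClass G ≤ 1 := Group.IsNilpotent.nilpotencyClass_le_one_iff.mpr hcomm
    omega
  have hGp := IsPGroup.of_card hG
  have : Nontrivial G := not_subsingleton_iff_nontrivial.mp fun _ => hcomm inferInstance
  obtain ⟨m, hm⟩ := hGp.index (Subgroup.center G)
  have hmn : m < n := by
    rw [← Nat.pow_lt_pow_iff_right hp.one_lt, ← hm, ← hG]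
    have := Finite.one_lt_card_iff_nontrivial.mpr hGp.center_nontrivial
    rw [← (Subgroup.center G).card_mul_index]
    exact lt_mul_left (Nat.pos_of_ne_zero Subgroup.index_ne_zero_of_finite) this
  have hm2 : 2 ≤ m := by
    by_contra hlt
    have : IsCyclic (G ⧸ Subgroup.center G) := isCyclic_of_card_dvd_prime (p := p) <| by
      rw [← Subgroup.index, hm]
      exact (pow_dvd_pow p (by omega : m ≤ 1)).trans (pow_one p).dvd
    exact hcomm (isMulCommutative_of_isCyclic_quotient_center_self G)
  have := ih m hmn hm hm2
  rw [Group.nilpotencyClass_eq_quotient_center_plus_one]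
  omega

theorem hasMaximalClass_of_isMulCommutative_of_index_eq {C : Subgroup G} [C.Normal]
    [IsMulCommutative C] (hG : Nat.card G = p ^ n) (hn : 2 ≤ n) (hC : C.index = p)
    (hZ : Nat.card (Subgroup.center G) = p) : HasMaximalClass G n := by
  have hp : p.Prime := Fact.out
  have := (IsPGroup.of_card hG).isNilpotent
  refine ⟨this, le_antisymm (nilpotencyClass_lt_of_card_eq_prime_pow hG hn) ?_⟩
  have hle := card_inf_upperCentralSeries_le (isCoatom_of_prime_index (hC ▸ hp))
    (Group.nilpotencyClass G)
  rw [Subgroup.upperCentralSeries_nilpotencyClass, inf_top_eq, hZ] at hle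
  rw [← Nat.pow_le_pow_iff_right hp.one_lt, ← hG, ← C.card_mul_index, hC, pow_succ]
  exact Nat.mul_le_mul_right p hle

end PGroup

end GroupTheory

section Representation

open scoped MonoidAlgebra

variable {k G V : Type*} [Field k] [Group G] [AddCommGroup V] [Module k V]

theorem isIrreducible_iff_forall_invariant {ρ : Representation k G V} :
    ρ.IsIrreducible ↔ Nontrivial V ∧
      ∀ W : Submodule k V, (∀ g, ∀ w ∈ W, ρ g w ∈ W) → W = ⊥ ∨ W = ⊤ := by
  constructor
  · refine fun hρ => ⟨?_, fun W hW => ?_⟩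
    · by_contra hV
      have := not_nontrivial_iff_subsingleton.mp hV
      exact bot_ne_top (α := Subrepresentation ρ)
        (Subrepresentation.toSubmodule_injective (Subsingleton.elim _ _))
    · exact (eq_bot_or_eq_top (⟨W, hW⟩ : Subrepresentation ρ)).imp
        (congrArg Subrepresentation.toSubmodule) (congrArg Subrepresentation.toSubmodule)
  · rintro ⟨hV, hinv⟩
    have : Nontrivial (Subrepresentation ρ) :=
      ⟨⊥, ⊤, fun h => bot_ne_top (congrArg Subrepresentation.toSubmodule h)⟩
    exact ⟨fun W => (hinv W.toSubmodule W.apply_mem_toSubmodule).imp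
      (fun h => Subrepresentation.toSubmodule_injective h)
      (fun h => Subrepresentation.toSubmodule_injective h)⟩

theorem isIrreducible_of_simple (V : FDRep k G) [Simple V] :
    Representation.IsIrreducible V.ρ := by
  refine isIrreducible_iff_forall_invariant.mpr ⟨?_, fun W hW => or_iff_not_imp_left.mpr ?_⟩
  · by_contra hV
    have := not_nontrivial_iff_subsingleton.mp hV
    exact id_nonzero V (by ext v; exact Subsingleton.elim (α := V) _ _)
  · intro hbot
    let σ := Subrepresentation.toRepresentation (ρ := V.ρ) ⟨W, hW⟩
    let ι : FDRep.of σ ⟶ V := ⟨InducedCategory.homMk (ModuleCat.ofHom W.subtype), fun _ => rfl⟩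
    have : Mono ι := ConcreteCategory.mono_of_injective ι Subtype.val_injective
    have hne : ι ≠ 0 := fun h0 => hbot <| (Submodule.eq_bot_iff W).mpr fun w hw =>
      congrArg (fun f : FDRep.of σ ⟶ V => f.hom.hom.hom ⟨w, hw⟩) h0
    have := isIso_of_mono_of_nonzero hne
    refine Submodule.eq_top_iff'.mpr fun v => ?_
    have hv : (((inv ι).hom.hom.hom v : W) : V) = v :=
      congrArg (fun f : V ⟶ V => f.hom.hom.hom v) (IsIso.inv_hom_id ι)
    exact hv ▸ Subtype.property _

theorem exists_monoidHom_of_forall_exists_eq_smul (ρ : Representation k G V) {v : V} (hv : v ≠ 0)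
    (h : ∀ g, ∃ c : k, ρ g v = c • v) : ∃ θ : G →* k, ∀ g, ρ g v = θ g • v := by
  choose θ hθ using h
  have eq_of_smul_eq {a b : k} (hab : a • v = b • v) : a = b := smul_left_injective k hv hab
  refine ⟨⟨⟨θ, eq_of_smul_eq ?_⟩, fun x y => eq_of_smul_eq ?_⟩, hθ⟩
  · rw [← hθ, map_one, Module.End.one_apply, one_smul]
  · rw [← hθ, map_mul, Module.End.mul_apply, hθ y, map_smul, hθ x, smul_smul, mul_comm]

open scoped IsMulCommutative in
theorem exists_common_eigenvector [IsAlgClosed k] [FiniteDimensional k V] [Nontrivial V]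
    [IsMulCommutative G] (ρ : Representation k G V) :
    ∃ v ≠ 0, ∃ θ : G →* k, ∀ g, ρ g v = θ g • v := by
  have : Nontrivial ρ.asModule := ‹Nontrivial V›
  have : IsArtinian k[G] ρ.asModule := isArtinian_of_tower k inferInstance
  obtain ⟨W, hW⟩ := IsAtomic.exists_atom (Submodule k[G] ρ.asModule)
  have : IsSimpleModule k[G] W := isSimpleModule_iff_isAtom.mpr hW
  have : FiniteDimensional k W := inferInstanceAs (FiniteDimensional k (W.restrictScalars k))
  obtain ⟨v, hv, hspan⟩ := finrank_eq_one_iff'.mp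
    (IsSimpleModule.finrank_eq_one_of_isMulCommutative k[G] W k)
  have hv₀ : ρ.asModuleEquiv v ≠ 0 := fun h => hv (Subtype.ext h)
  have eq_smul (g : G) : ∃ c : k, ρ g (ρ.asModuleEquiv v) = c • ρ.asModuleEquiv v := by
    obtain ⟨c, hc⟩ := hspan (MonoidAlgebra.of k G g • v)
    refine ⟨c, ?_⟩
    rw [← Representation.asAlgebraHom_of, ← Representation.asModuleEquiv_map_smul]
    exact congrArg (fun w : W => ρ.asModuleEquiv w) hc.symm
  exact ⟨_, hv₀, exists_monoidHom_of_forall_exists_eq_smul ρ hv₀ eq_smul⟩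

section Irreducible

variable {ρ : Representation k G V} [ρ.IsIrreducible]

theorem isIrreducible_lift_ker :
    Representation.IsIrreducible (QuotientGroup.lift (MonoidHom.ker ρ) ρ le_rfl) := by
  obtain ⟨hV, hinv⟩ := isIrreducible_iff_forall_invariant.mp ‹ρ.IsIrreducible›
  exact isIrreducible_iff_forall_invariant.mpr ⟨hV, fun W hW => hinv W fun g => hW g⟩

variable [IsAlgClosed k] [FiniteDimensional k V]

theorem exists_central_character (ρ : Representation k G V) [ρ.IsIrreducible] :
    ∃ ω : Subgroup.center G →* k, ∀ z : Subgroup.center G, ρ z = ω z • 1 := by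
  have exists_scalar (z : Subgroup.center G) : ∃ c : k, ρ z = c • 1 := by
    have hz : (z : G) ∈ Submonoid.center G := z.2
    obtain ⟨c, hc⟩ :=
      Representation.IsIrreducible.algebraMap_intertwiningMap_bijective_of_isAlgClosed.2
        (Representation.IntertwiningMap.centralMul ρ z hz)
    refine ⟨c, LinearMap.ext fun v => ?_⟩
    exact (congrArg (fun f : ρ.IntertwiningMap ρ => f v) hc).symm
  obtain ⟨_, -⟩ := isIrreducible_iff_forall_invariant.mp ‹ρ.IsIrreducible›
  obtain ⟨v, hv⟩ := exists_ne (0 : V)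
  obtain ⟨ω, hω⟩ := exists_monoidHom_of_forall_exists_eq_smul
    (ρ.comp (Subgroup.center G).subtype) hv fun z =>
      (exists_scalar z).imp fun c hc => congrArg (· v) hc
  refine ⟨ω, fun z => ?_⟩
  obtain ⟨c, hc⟩ := exists_scalar z
  have hcω : c • v = ω z • v := by
    rw [← hω z]
    exact (congrArg (· v) hc).symm
  rw [hc, smul_left_injective k hv hcω]

theorem isCyclic_center_of_injective [Finite G] (hρ : Function.Injective ρ) :
    IsCyclic (Subgroup.center G) := by
  obtain ⟨ω, hω⟩ := exists_central_character ρ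
  refine isCyclic_of_injective_ringHom ω fun y z hyz => Subtype.ext (hρ ?_)
  rw [hω, hω, hyz]

theorem character_eq_zero_of_commutatorElement_mem_center (hρ : Function.Injective ρ) {x y : G}
    (hmem : ⁅y, x⁆ ∈ Subgroup.center G) (hne : ⁅y, x⁆ ≠ 1) : ρ.character x = 0 := by
  obtain ⟨ω, hω⟩ := exists_central_character ρ
  set c := ω ⟨_, hmem⟩
  have hscalar : ρ ⁅y, x⁆ = c • 1 := hω ⟨_, hmem⟩
  have hc : c ≠ 1 := fun h => hne (hρ (by rw [hscalar, h, one_smul, map_one]))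
  have htrace : c * ρ.character x = ρ.character x :=
    calc c * ρ.character x = LinearMap.trace k V (ρ ⁅y, x⁆ * ρ x) := by
          rw [hscalar, smul_one_mul, map_smul, smul_eq_mul, Representation.character]
      _ = ρ.character (y * x * y⁻¹) := by
          rw [← map_mul, ← conj_eq_commutatorElement_mul, MulAut.conj_apply,
            Representation.character]
      _ = ρ.character x := Representation.char_conj ρ x y
  by_contra h0
  exact hc ((mul_eq_right₀ h0).mp htrace)

theorem character_eq_zero_of_mem_upperCentralSeries_two (hρ : Function.Injective ρ) {x : G}
    (hx₂ : x ∈ Subgroup.upperCentralSeries G 2) (hx : x ∉ Subgroup.center G) :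
    ρ.character x = 0 := by
  obtain ⟨y, hy⟩ : ∃ y, ⁅y, x⁆ ≠ 1 := by
    by_contra! hcomm
    exact hx (Subgroup.mem_center_iff.mpr fun y =>
      commutatorElement_eq_one_iff_commute.mp (hcomm y))
  refine character_eq_zero_of_commutatorElement_mem_center hρ ?_ hy
  exact commutatorElement_inv x y ▸
    Subgroup.inv_mem _ (commutatorElement_mem_center_of_mem hx₂ y)

end Irreducible

end Representation

section Zeros

theorem sq_sub_le_sub_of_le_of_mul_le {p z h : ℕ} (hz : p ≤ z) (hh : p * z ≤ h) :
    p ^ 2 - p ≤ h - z :=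
  calc p ^ 2 - p = p * (p - 1) := by rw [Nat.mul_sub_one, sq]
    _ ≤ z * (p - 1) := Nat.mul_le_mul_right _ hz
    _ = p * z - z := by rw [Nat.mul_sub_one, mul_comm]
    _ ≤ h - z := Nat.sub_le_sub_right hh z

theorem eq_and_eq_sq_of_sub_le_sq_sub {p z h : ℕ} (hp : 1 < p) (hz : p ≤ z) (hh : p * z ≤ h)
    (hsub : h - z ≤ p ^ 2 - p) : z = p ∧ h = p ^ 2 := by
  have hle : z * (p - 1) ≤ p * (p - 1) :=
    calc z * (p - 1) = p * z - z := by rw [Nat.mul_sub_one, mul_comm]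
      _ ≤ h - z := Nat.sub_le_sub_right hh z
      _ ≤ p ^ 2 - p := hsub
      _ = p * (p - 1) := by rw [Nat.mul_sub_one, sq]
  obtain rfl : z = p := le_antisymm (Nat.le_of_mul_le_mul_right hle (Nat.sub_pos_of_lt hp)) hz
  refine ⟨rfl, ?_⟩
  rw [← sq] at hh
  have := Nat.le_self_pow two_ne_zero z
  omega

theorem ncard_compl_union_sdiff {G : Type*} [Group G] [Finite G] {C H Z : Subgroup G}
    (hZ : Z ≤ C ⊓ H) : ((C : Set G)ᶜ ∪ ((H : Set G) \ Z)).ncard =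
      Nat.card G - Nat.card C + (Nat.card (C ⊓ H : Subgroup G) - Nat.card Z) := by
  have hunion : (C : Set G)ᶜ ∪ ((H : Set G) \ Z) = (C : Set G)ᶜ ∪ ((C ⊓ H : Subgroup G) \ Z) := by
    ext x
    simp only [Set.mem_union, Set.mem_compl_iff, Set.mem_sdiff, SetLike.mem_coe, Subgroup.mem_inf]
    tauto
  have hdisj : Disjoint (C : Set G)ᶜ ((C ⊓ H : Subgroup G) \ Z) :=
    Set.disjoint_left.mpr fun _ hx hx' => hx hx'.1.1
  rw [hunion, Set.ncard_union_eq hdisj, Set.ncard_compl,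
    Set.ncard_sdiff (SetLike.coe_subset_coe.mpr hZ)]
  rfl

variable {k G V : Type*} [Field k] [Group G] [AddCommGroup V] [Module k V]

/-- The set of zeros of the character of a representation. -/
def characterZeros (ρ : Representation k G V) : Set G := {g | ρ.character g = 0}

variable [IsAlgClosed k] [FiniteDimensional k V] {ρ : Representation k G V} [ρ.IsIrreducible]

theorem compl_centralizer_union_sdiff_subset_characterZeros (hρ : Function.Injective ρ) {g : G}
    (hg₂ : g ∈ Subgroup.upperCentralSeries G 2) :
    (Subgroup.centralizer {g} : Set G)ᶜ ∪
      ((Subgroup.upperCentralSeries G 2 : Set G) \ Subgroup.center G) ⊆ characterZeros ρ := by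
  rintro x (hx | ⟨hx₂, hx⟩)
  · refine character_eq_zero_of_commutatorElement_mem_center hρ
      (commutatorElement_mem_center_of_mem hg₂ x) fun h => hx ?_
    exact Subgroup.mem_centralizer_singleton_iff.mpr
      (commutatorElement_eq_one_iff_mul_comm.mp h).symm
  · exact character_eq_zero_of_mem_upperCentralSeries_two hρ hx₂ hx

variable [Finite G] {p : ℕ} [Fact p.Prime]

theorem exists_index_centralizer_eq (hG : IsPGroup p G) (hρ : Function.Injective ρ)
    (hdim : Module.finrank k V ≠ 1) :
    ∃ g ∈ Subgroup.upperCentralSeries G 2, g ∉ Subgroup.center G ∧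
      (Subgroup.centralizer {g}).index = p := by
  have := hG.isNilpotent
  have := isCyclic_center_of_injective hρ
  obtain ⟨g, hg₂, hg, hgp⟩ := exists_mem_upperCentralSeries_two_pow_mem_center hG fun _ =>
    hdim (Representation.IsIrreducible.finrank_eq_one_of_isMulCommutative ρ)
  exact ⟨g, hg₂, hg, index_centralizer_eq_of_isCyclic_center Fact.out hg₂ hg hgp⟩

section Centralizer

variable {g : G}

theorem add_le_ncard_characterZeros (hρ : Function.Injective ρ)
    (hg₂ : g ∈ Subgroup.upperCentralSeries G 2) (hC : (Subgroup.centralizer {g}).index = p) :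
    Nat.card G - Nat.card G / p +
      (Nat.card (Subgroup.centralizer {g} ⊓ Subgroup.upperCentralSeries G 2 : Subgroup G) -
        Nat.card (Subgroup.center G)) ≤ (characterZeros ρ).ncard := by
  rw [← card_eq_card_div_of_index_eq (NeZero.ne p) hC,
    ← ncard_compl_union_sdiff center_le_centralizer_inf]
  exact Set.ncard_le_ncard (compl_centralizer_union_sdiff_subset_characterZeros hρ hg₂)

theorem card_center_eq_and_card_centralizer_inf_eq
    (hG : IsPGroup p G) (hρ : Function.Injective ρ)
    (hzeros : (characterZeros ρ).ncard ≤ Nat.card G - Nat.card G / p + (p ^ 2 - p))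
    (hg₂ : g ∈ Subgroup.upperCentralSeries G 2) (hg : g ∉ Subgroup.center G)
    (hC : (Subgroup.centralizer {g}).index = p) :
    Nat.card (Subgroup.center G) = p ∧
    Nat.card (Subgroup.centralizer {g} ⊓ Subgroup.upperCentralSeries G 2 : Subgroup G) = p ^ 2 := by
  have hp : p.Prime := Fact.out
  have : Nontrivial G := ⟨g, 1, fun h => hg (h ▸ Subgroup.one_mem _)⟩
  refine eq_and_eq_sq_of_sub_le_sq_sub hp.one_lt (prime_le_card_center hG)
    (prime_mul_card_le_card_of_lt hG (center_lt_centralizer_inf hg₂ hg)) ?_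
  exact Nat.le_of_add_le_add_left ((add_le_ncard_characterZeros hρ hg₂ hC).trans hzeros)

theorem characterZeros_eq_compl_centralizer_union_sdiff
    (hG : IsPGroup p G) (hρ : Function.Injective ρ)
    (hzeros : (characterZeros ρ).ncard ≤ Nat.card G - Nat.card G / p + (p ^ 2 - p))
    (hg₂ : g ∈ Subgroup.upperCentralSeries G 2) (hg : g ∉ Subgroup.center G)
    (hC : (Subgroup.centralizer {g}).index = p) :
    characterZeros ρ = (Subgroup.centralizer {g} : Set G)ᶜ ∪
      ((Subgroup.upperCentralSeries G 2 : Set G) \ Subgroup.center G) := by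
  obtain ⟨hZ, hH⟩ := card_center_eq_and_card_centralizer_inf_eq hG hρ hzeros hg₂ hg hC
  refine (Set.eq_of_subset_of_ncard_le
    (compl_centralizer_union_sdiff_subset_characterZeros hρ hg₂) ?_).symm
  rwa [ncard_compl_union_sdiff center_le_centralizer_inf,
    card_eq_card_div_of_index_eq (NeZero.ne p) hC, hZ, hH]

theorem isMulCommutative_centralizer_of_ncard_characterZeros_le
    (hG : IsPGroup p G) (hρ : Function.Injective ρ)
    (hzeros : (characterZeros ρ).ncard ≤ Nat.card G - Nat.card G / p + (p ^ 2 - p))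
    (hg₂ : g ∈ Subgroup.upperCentralSeries G 2) (hg : g ∉ Subgroup.center G)
    (hC : (Subgroup.centralizer {g}).index = p) :
    IsMulCommutative (Subgroup.centralizer {g}) := by
  have : Group.IsNilpotent G := hG.isNilpotent
  have : (Subgroup.centralizer {g}).Normal := normal_of_index_eq hG hC
  by_contra hcomm
  obtain ⟨a, ha, b, hb, hab, hne⟩ := exists_commutatorElement_mem_center hcomm
  have mem_of_zero {x : G} (hx : x ∈ Subgroup.centralizer {g}) (hx₀ : ρ.character x = 0) :
      x ∈ Subgroup.centralizer {g} ⊓ Subgroup.upperCentralSeries G 2 := by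
    have : x ∈ characterZeros ρ := hx₀
    rw [characterZeros_eq_compl_centralizer_union_sdiff hG hρ hzeros hg₂ hg hC] at this
    exact ⟨hx, (this.resolve_left fun h => h hx).1⟩
  have hba : ⁅b, a⁆ ∈ Subgroup.center G := commutatorElement_inv a b ▸ Subgroup.inv_mem _ hab
  have hba_ne : ⁅b, a⁆ ≠ 1 := fun h => hne <| by rw [← commutatorElement_inv, h, inv_one]
  have hH := (card_center_eq_and_card_centralizer_inf_eq hG hρ hzeros hg₂ hg hC).2
  have := IsPGroup.isMulCommutative_of_card_eq_prime_sq hH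
  exact hne <| commutatorElement_eq_one_iff_mul_comm.mpr <| setLike_mul_comm
    (mem_of_zero ha (character_eq_zero_of_commutatorElement_mem_center hρ hba hba_ne))
    (mem_of_zero hb (character_eq_zero_of_commutatorElement_mem_center hρ hab hne))

end Centralizer

theorem le_ncard_characterZeros_of_injective (hG : IsPGroup p G) (hρ : Function.Injective ρ)
    (hdim : Module.finrank k V ≠ 1) :
    Nat.card G - Nat.card G / p + (p ^ 2 - p) ≤ (characterZeros ρ).ncard := by
  obtain ⟨g, hg₂, hg, hC⟩ := exists_index_centralizer_eq hG hρ hdim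
  have : Nontrivial G := ⟨g, 1, fun h => hg (h ▸ Subgroup.one_mem _)⟩
  refine le_trans (Nat.add_le_add_left ?_ _) (add_le_ncard_characterZeros hρ hg₂ hC)
  exact sq_sub_le_sub_of_le_of_mul_le (prime_le_card_center hG)
    (prime_mul_card_le_card_of_lt hG (center_lt_centralizer_inf hg₂ hg))

theorem add_card_ker_mul_le_ncard_characterZeros (hG : IsPGroup p G)
    (hdim : Module.finrank k V ≠ 1) :
    Nat.card G - Nat.card G / p + Nat.card (MonoidHom.ker ρ) * (p ^ 2 - p) ≤
      (characterZeros ρ).ncard := by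
  let ρ' : Representation k (G ⧸ MonoidHom.ker ρ) V := QuotientGroup.lift (MonoidHom.ker ρ) ρ le_rfl
  have := isIrreducible_lift_ker (ρ := ρ)
  have hρ' : Function.Injective ρ' :=
    (QuotientGroup.injective_lift_iff _ ρ le_rfl).mpr rfl
  have hcard : (characterZeros ρ).ncard = Nat.card (MonoidHom.ker ρ) * (characterZeros ρ').ncard :=
    QuotientGroup.card_preimage_mk (MonoidHom.ker ρ) (characterZeros ρ')
  calc Nat.card G - Nat.card G / p + Nat.card (MonoidHom.ker ρ) * (p ^ 2 - p)
    _ ≤ Nat.card (MonoidHom.ker ρ) * (Nat.card (G ⧸ MonoidHom.ker ρ) -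
          Nat.card (G ⧸ MonoidHom.ker ρ) / p + (p ^ 2 - p)) := by
        rw [mul_add, Nat.mul_sub _ (Nat.card (G ⧸ MonoidHom.ker ρ)),
          (MonoidHom.ker ρ).card_eq_card_quotient_mul_card_subgroup,
          mul_comm (Nat.card (G ⧸ MonoidHom.ker ρ))]
        exact Nat.add_le_add_right
          (Nat.sub_le_sub_left (Nat.mul_div_le_mul_div_assoc _ _ _) _) _
    _ ≤ (characterZeros ρ).ncard := by
        rw [hcard]
        exact Nat.mul_le_mul_left _ <|
          le_ncard_characterZeros_of_injective (hG.to_quotient _) hρ' hdim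

theorem le_ncard_characterZeros (hG : IsPGroup p G) (hdim : Module.finrank k V ≠ 1) :
    Nat.card G - Nat.card G / p + (p ^ 2 - p) ≤ (characterZeros ρ).ncard :=
  (Nat.add_le_add_left (Nat.le_mul_of_pos_left _ Nat.card_pos) _).trans
    (add_card_ker_mul_le_ncard_characterZeros hG hdim)

theorem injective_of_ncard_characterZeros_le (hG : IsPGroup p G) (hdim : Module.finrank k V ≠ 1)
    (hzeros : (characterZeros ρ).ncard ≤ Nat.card G - Nat.card G / p + (p ^ 2 - p)) :
    Function.Injective ρ := by
  have hp : p.Prime := Fact.out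
  have hpos : 0 < p ^ 2 - p := Nat.sub_pos_of_lt (lt_self_pow₀ hp.one_lt one_lt_two)
  have hle : Nat.card (MonoidHom.ker ρ) * (p ^ 2 - p) ≤ 1 * (p ^ 2 - p) := by
    have := (add_card_ker_mul_le_ncard_characterZeros hG hdim).trans hzeros
    omega
  refine (MonoidHom.ker_eq_bot_iff ρ).mp (Subgroup.card_eq_one.mp ?_)
  exact le_antisymm (Nat.le_of_mul_le_mul_right hle hpos) Nat.card_pos

end Zeros

section Monomial

variable {k G V : Type*} [Field k] [Group G] [AddCommGroup V] [Module k V]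
  {ρ : Representation k G V} {C : Subgroup G} {θ : C →* k} {v : V}

theorem apply_apply_eq_smul (hθ : ∀ u : C, ρ u v = θ u • v) {x u : G} (hu : x⁻¹ * u * x ∈ C) :
    ρ u (ρ x v) = θ ⟨x⁻¹ * u * x, hu⟩ • ρ x v := by
  have hconj : u * x = x * (x⁻¹ * u * x) := by group
  rw [← map_smul, ← hθ, ← Module.End.mul_apply, ← map_mul, ← Module.End.mul_apply, ← map_mul, hconj]

theorem apply_ne_zero (hv : v ≠ 0) (x : G) : ρ x v ≠ 0 := fun h => hv <| by
  rw [← Representation.inv_self_apply ρ x v, h, map_zero]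

variable [ρ.IsIrreducible]

theorem span_range_apply_out_eq_top (hv : v ≠ 0) (hθ : ∀ u : C, ρ u v = θ u • v) :
    Submodule.span k (Set.range fun q : G ⧸ C => ρ q.out v) = ⊤ := by
  set W := Submodule.span k (Set.range fun q : G ⧸ C => ρ q.out v)
  have apply_mem (x : G) : ρ x v ∈ W := by
    have hx : (x : G ⧸ C).out⁻¹ * x ∈ C := QuotientGroup.eq.mp (Quotient.out_eq' (x : G ⧸ C))
    have hsmul : ρ x v = θ ⟨_, hx⟩ • ρ (x : G ⧸ C).out v := by
      rw [← map_smul, ← hθ, ← Module.End.mul_apply, ← map_mul, mul_inv_cancel_left]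
    exact hsmul ▸ W.smul_mem _ (Submodule.subset_span ⟨_, rfl⟩)
  have invariant (x : G) : W ≤ W.comap (ρ x) := by
    rw [Submodule.span_le]
    rintro _ ⟨q, rfl⟩
    have := apply_mem (x * q.out)
    rwa [map_mul] at this
  refine ((isIrreducible_iff_forall_invariant.mp ‹_›).2 W invariant).resolve_left fun hbot => ?_
  exact apply_ne_zero (ρ := ρ) hv 1 ((Submodule.mem_bot k).mp (hbot ▸ apply_mem 1))

variable [IsAlgClosed k] [FiniteDimensional k V]

theorem eq_of_mul_inv_mem_center (hρ : Function.Injective ρ) (hv : v ≠ 0)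
    (hθ : ∀ u : C, ρ u v = θ u • v) {a b : C} (hab : (a * b⁻¹ : G) ∈ Subgroup.center G)
    (heq : θ a = θ b) : a = b := by
  obtain ⟨ω, hω⟩ := exists_central_character ρ
  have hscalar : ρ (a * b⁻¹) = ω ⟨_, hab⟩ • 1 := hω ⟨_, hab⟩
  have hfix : ρ (a * b⁻¹) v = (1 : k) • v := by
    have hone : θ (a * b⁻¹) = 1 := by rw [map_mul, heq, ← map_mul, mul_inv_cancel, map_one]
    exact hone ▸ hθ (a * b⁻¹)
  have hsmul : ω ⟨_, hab⟩ • v = (1 : k) • v := by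
    rw [← hfix, hscalar, LinearMap.smul_apply, Module.End.one_apply]
  have hω₁ : ω ⟨_, hab⟩ = 1 := smul_left_injective k hv hsmul
  have : (a * b⁻¹ : G) = 1 := hρ (by rw [hscalar, hω₁, one_smul, map_one])
  exact Subtype.ext (mul_inv_eq_one.mp this)

end Monomial

section CentralizerBasis

variable {k G V : Type*} [Field k] [Group G] [AddCommGroup V] [Module k V]
  {ρ : Representation k G V} [ρ.IsIrreducible] [IsAlgClosed k] [FiniteDimensional k V] {g : G}

theorem conj_mul_inv_mem_center (hg₂ : g ∈ Subgroup.upperCentralSeries G 2) (x : G) :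
    x⁻¹ * g * x * g⁻¹ ∈ Subgroup.center G := by
  have := Subgroup.inv_mem _ (commutatorElement_mem_center_of_mem hg₂ x⁻¹)
  rwa [commutatorElement_inv, commutatorElement_def, inv_inv] at this

theorem linearIndependent_apply_out [(Subgroup.centralizer {g}).Normal]
    (hρ : Function.Injective ρ) (hg₂ : g ∈ Subgroup.upperCentralSeries G 2) {v : V} (hv : v ≠ 0)
    {θ : Subgroup.centralizer {g} →* k} (hθ : ∀ u : Subgroup.centralizer {g}, ρ u v = θ u • v) :
    LinearIndependent k fun q : G ⧸ Subgroup.centralizer {g} => ρ q.out v := by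
  have hconj (x : G) : x⁻¹ * g * x ∈ Subgroup.centralizer {g} := by
    have hgC : g ∈ Subgroup.centralizer {g} := Subgroup.mem_centralizer_singleton_iff.mpr rfl
    simpa using Subgroup.Normal.conj_mem ‹_› g hgC x⁻¹
  refine Module.End.eigenvectors_linearIndependent' (ρ g)
    (fun q : G ⧸ Subgroup.centralizer {g} => θ ⟨q.out⁻¹ * g * q.out, hconj q.out⟩) ?_ _ fun q =>
      ⟨Module.End.mem_eigenspace_iff.mpr (apply_apply_eq_smul hθ _), apply_ne_zero hv _⟩
  intro q r hqr
  have hcen : q.out⁻¹ * g * q.out * (r.out⁻¹ * g * r.out)⁻¹ ∈ Subgroup.center G := by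
    have := Subgroup.mul_mem _ (conj_mul_inv_mem_center hg₂ q.out)
      (Subgroup.inv_mem _ (conj_mul_inv_mem_center hg₂ r.out))
    rwa [mul_inv_rev _ g⁻¹, mul_assoc _ g⁻¹, inv_inv, inv_mul_cancel_left] at this
  have heq : q.out⁻¹ * g * q.out = r.out⁻¹ * g * r.out :=
    congrArg Subtype.val (eq_of_mul_inv_mem_center hρ hv hθ hcen hqr)
  have hmem : q.out * r.out⁻¹ ∈ Subgroup.centralizer {g} := by
    rw [Subgroup.mem_centralizer_singleton_iff]
    calc q.out * r.out⁻¹ * g = q.out * (r.out⁻¹ * g * r.out) * r.out⁻¹ := by group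
      _ = g * (q.out * r.out⁻¹) := by rw [← heq]; group
  rw [← q.out_eq', ← r.out_eq']
  refine QuotientGroup.eq.mpr (Subgroup.Normal.mem_comm ‹_› ?_)
  simpa using Subgroup.inv_mem _ hmem

theorem exists_basis_forall_apply_eq_smul [(Subgroup.centralizer {g}).Normal]
    [IsMulCommutative (Subgroup.centralizer {g})]
    (hρ : Function.Injective ρ) (hg₂ : g ∈ Subgroup.upperCentralSeries G 2) :
    ∃ (θ : Subgroup.centralizer {g} →* k) (b : Module.Basis (G ⧸ Subgroup.centralizer {g}) k V),
      ∀ q u, ∀ hu : q.out⁻¹ * u * q.out ∈ Subgroup.centralizer {g},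
        ρ u (b q) = θ ⟨q.out⁻¹ * u * q.out, hu⟩ • b q := by
  obtain ⟨_, -⟩ := isIrreducible_iff_forall_invariant.mp ‹ρ.IsIrreducible›
  obtain ⟨v, hv, θ, hθ⟩ :=
    exists_common_eigenvector (ρ.comp (Subgroup.centralizer {g}).subtype)
  refine ⟨θ, Module.Basis.mk (linearIndependent_apply_out hρ hg₂ hv hθ)
    (span_range_apply_out_eq_top hv hθ).ge, fun q u hu => ?_⟩
  rw [Module.Basis.mk_apply]
  exact apply_apply_eq_smul hθ hu

end CentralizerBasis

section Induction

variable {G : Type*} [Group G]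

theorem trace_eq_sum_of_forall_eq_smul {R M ι : Type*} [CommRing R] [AddCommGroup M] [Module R M]
    [Fintype ι] (b : Module.Basis ι R M) {f : M →ₗ[R] M} {μ : ι → R}
    (hf : ∀ i, f (b i) = μ i • b i) : LinearMap.trace R M f = ∑ i, μ i := by
  classical
  rw [LinearMap.trace_eq_matrix_trace R b, Matrix.trace]
  refine Finset.sum_congr rfl fun i _ => ?_
  rw [Matrix.diag_apply, LinearMap.toMatrix_apply, hf, map_smul, Module.Basis.repr_self,
    Finsupp.smul_single, Finsupp.single_eq_same, smul_eq_mul, mul_one]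

theorem isComplexCharacter_of_monoidHom (θ : G →* ℂ) : IsComplexCharacter θ := by
  refine ⟨FDRep.of ((algebraMap ℂ (Module.End ℂ ℂ) : ℂ →* Module.End ℂ ℂ).comp θ), ?_⟩
  ext u
  change LinearMap.trace ℂ ℂ (algebraMap ℂ (Module.End ℂ ℂ) (θ u)) = θ u
  rw [Algebra.algebraMap_eq_smul_one, map_smul, LinearMap.trace_one, Module.finrank_self,
    Nat.cast_one, smul_eq_mul, mul_one]

theorem conj_eq_conj_out {C : Subgroup G} [IsMulCommutative C] {g x : G} (hg : x⁻¹ * g * x ∈ C) :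
    x⁻¹ * g * x = (x : G ⧸ C).out⁻¹ * g * (x : G ⧸ C).out := by
  have hx : (x : G ⧸ C).out⁻¹ * x ∈ C := QuotientGroup.eq.mp (Quotient.out_eq' (x : G ⧸ C))
  set t := (x : G ⧸ C).out
  have hcomm : t⁻¹ * x * (x⁻¹ * g * x) = x⁻¹ * g * x * (t⁻¹ * x) := setLike_mul_comm hx hg
  calc x⁻¹ * g * x = x⁻¹ * g * x * (t⁻¹ * x) * (t⁻¹ * x)⁻¹ := by group
    _ = t⁻¹ * g * t := by rw [← hcomm]; group

variable [Fintype G]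

theorem inducedCharacter_eq_zero {H : Subgroup G} [H.Normal] (θ : H → ℂ) {g : G} (hg : g ∉ H) :
    inducedCharacter H θ g = 0 := by
  rw [inducedCharacter, Finset.sum_eq_zero, mul_zero]
  refine fun x _ => dif_neg fun h => hg ?_
  simpa [mul_assoc] using Subgroup.Normal.conj_mem ‹_› _ h x⁻¹

theorem sum_comp_mk_eq_card_mul_sum {R : Type*} [Semiring R] (H : Subgroup G) [Fintype (G ⧸ H)]
    (f : G ⧸ H → R) : ∑ x : G, f x = Nat.card H * ∑ q, f q := by
  classical
  calc ∑ x : G, f x = ∑ r : (G ⧸ H) × H, f r.1 :=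
        H.groupEquivQuotientProdSubgroup.sum_comp fun r => f r.1
    _ = Nat.card H * ∑ q, f q := by
        simp [Fintype.sum_prod_type, Finset.mul_sum, Nat.card_eq_fintype_card]

theorem inducedCharacter_eq_sum {C : Subgroup G} [IsMulCommutative C] [Fintype (G ⧸ C)]
    (θ : C → ℂ) {g : G} (hg : ∀ x, x⁻¹ * g * x ∈ C) :
    inducedCharacter C θ g = ∑ q : G ⧸ C, θ ⟨q.out⁻¹ * g * q.out, hg _⟩ := by
  let f (q : G ⧸ C) : ℂ := θ ⟨q.out⁻¹ * g * q.out, hg _⟩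
  have summand_eq (x : G) (h : x⁻¹ * g * x⁻¹⁻¹ ∈ C) : θ ⟨x⁻¹ * g * x⁻¹⁻¹, h⟩ = f x := by
    refine congrArg θ (Subtype.ext ?_)
    simpa using conj_eq_conj_out (hg x)
  classical
  calc inducedCharacter C θ g
      = (Nat.card C : ℂ)⁻¹ * ∑ x : G, f x := by
        rw [inducedCharacter, ← Equiv.sum_comp (Equiv.inv G)]
        refine congrArg _ (Finset.sum_congr rfl fun x _ => ?_)
        have h : x⁻¹ * g * x⁻¹⁻¹ ∈ C := by simpa using hg x
        exact (dif_pos h).trans (summand_eq x h)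
    _ = ∑ q, f q := by
        rw [sum_comp_mk_eq_card_mul_sum, inv_mul_cancel_left₀]
        exact Nat.cast_ne_zero.mpr Nat.card_pos.ne'

end Induction

section Faithful

theorem forall_eq_one_of_norm_eq_one_of_sum_eq_card {s : Multiset ℂ} (hs : ∀ z ∈ s, ‖z‖ = 1)
    (hsum : s.sum = s.card) : ∀ z ∈ s, z = 1 := by
  have sum_one_sub_re : (s.map fun z => 1 - z.re).sum = 0 := by
    have hre : (s.map Complex.re).sum = s.card := by
      simpa using (map_multiset_sum Complex.reAddGroupHom s).symm.trans (congrArg Complex.re hsum)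
    simp [Multiset.sum_map_sub, hre]
  intro z hz
  have re_eq_one : 1 - z.re = 0 :=
    Multiset.all_zero_of_le_zero_le_of_sum_eq_zero
      (Multiset.forall_mem_map_iff.mpr fun w hw => sub_nonneg.mpr (hs w hw ▸ Complex.re_le_norm w))
      sum_one_sub_re _ (Multiset.mem_map_of_mem _ hz)
  have hnorm : z.re = ‖z‖ := (sub_eq_zero.mp re_eq_one).symm.trans (hs z hz).symm
  rw [Complex.eq_coe_norm_of_nonneg (Complex.re_eq_norm.mp hnorm), hs z hz, Complex.ofReal_one]

section FiniteOrder

variable {V : Type*} [AddCommGroup V] [Module ℂ V] {f : Module.End ℂ V} {m : ℕ}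

theorem isSemisimple_of_pow_eq_one (hm : m ≠ 0) (hf : f ^ m = 1) : f.IsSemisimple := by
  have hsep : (Polynomial.X ^ m - 1 : Polynomial ℂ).Separable :=
    Polynomial.X_pow_sub_one_separable_iff.mpr (Nat.cast_ne_zero.mpr hm)
  refine Module.End.isSemisimple_of_squarefree_aeval_eq_zero hsep.squarefree ?_
  rw [map_sub, map_pow, Polynomial.aeval_X, hf, map_one, sub_self]

variable [FiniteDimensional ℂ V]

theorem norm_eq_one_of_mem_roots_charpoly (hm : m ≠ 0) (hf : f ^ m = 1) {μ : ℂ}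
    (hμ : μ ∈ f.charpoly.roots) : ‖μ‖ = 1 := by
  have hev : f.HasEigenvalue μ :=
    f.hasEigenvalue_iff_isRoot_charpoly μ |>.mpr (Polynomial.isRoot_of_mem_roots hμ)
  obtain ⟨v, hv⟩ := hev.exists_hasEigenvector
  have hpow : μ ^ m • v = (1 : ℂ) • v := by rw [← hv.pow_apply, hf, Module.End.one_apply, one_smul]
  exact Complex.norm_eq_one_of_pow_eq_one (smul_left_injective ℂ hv.2 hpow) hm

theorem eq_one_of_pow_eq_one_of_trace_eq_finrank (hm : m ≠ 0) (hf : f ^ m = 1)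
    (htr : LinearMap.trace ℂ V f = Module.finrank ℂ V) : f = 1 := by
  have hsplits : f.charpoly.Splits := IsAlgClosed.splits _
  have hcard : f.charpoly.roots.card = Module.finrank ℂ V := by
    rw [← hsplits.natDegree_eq_card_roots, f.charpoly_natDegree]
  have hroots : f.charpoly.roots = Multiset.replicate (Module.finrank ℂ V) 1 := by
    refine Multiset.eq_replicate.mpr ⟨hcard, forall_eq_one_of_norm_eq_one_of_sum_eq_card
      (fun μ hμ => norm_eq_one_of_mem_roots_charpoly hm hf hμ) ?_⟩
    rw [← Module.End.trace_eq_sum_roots_charpoly_of_splits hsplits, htr, hcard]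
  have hnil : IsNilpotent (f - algebraMap ℂ _ 1) := by
    refine ⟨Module.finrank ℂ V, ?_⟩
    have := f.aeval_self_charpoly
    rwa [hsplits.eq_prod_roots_of_monic f.charpoly_monic, hroots, Multiset.map_replicate,
      Multiset.prod_replicate, map_pow, map_sub, Polynomial.aeval_X, Polynomial.aeval_C] at this
  have hss : (f - algebraMap ℂ _ 1).IsSemisimple :=
    Module.End.isSemisimple_sub_algebraMap_iff.mpr (isSemisimple_of_pow_eq_one hm hf)
  rw [← map_one (algebraMap ℂ (Module.End ℂ V))]
  exact sub_eq_zero.mp (Module.End.eq_zero_of_isNilpotent_isSemisimple hnil hss)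

end FiniteOrder

theorem isFaithfulCharacter_of_injective {G V : Type*} [Group G] [Finite G] [AddCommGroup V]
    [Module ℂ V] [FiniteDimensional ℂ V] {ρ : Representation ℂ G V} (hρ : Function.Injective ρ) :
    IsFaithfulCharacter ρ.character := by
  refine Set.eq_singleton_iff_unique_mem.mpr ⟨rfl, fun g hg => hρ ?_⟩
  rw [map_one]
  refine eq_one_of_pow_eq_one_of_trace_eq_finrank (m := Nat.card G) Nat.card_pos.ne' ?_ ?_
  · rw [← map_pow, pow_card_eq_one', map_one]
  · exact hg.trans ρ.char_one

end Faithful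

section Extremal

variable {G : Type*} [Group G]

theorem card_div_eq_pow_sub_one {k V : Type*} [Field k] [IsAlgClosed k] [AddCommGroup V]
    [Module k V] [FiniteDimensional k V] (ρ : Representation k G V) [ρ.IsIrreducible] {p n : ℕ}
    (hp : 0 < p) (hG : Nat.card G = p ^ n) (hdim : Module.finrank k V ≠ 1) :
    Nat.card G / p = p ^ (n - 1) := by
  have hn : n ≠ 0 := by
    rintro rfl
    have : Subsingleton G := (Nat.card_eq_one_iff_unique.mp hG).1
    exact hdim (Representation.IsIrreducible.finrank_eq_one_of_isMulCommutative ρ)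
  exact Nat.div_eq_of_eq_mul_left hp (by rw [hG, pow_sub_one_mul hn])

theorem sq_lt_card_of_index_eq {C : Subgroup G} {p n : ℕ} (hp : 1 < p) (hG : Nat.card G = p ^ n)
    (hC : C.index = p) (hn : 3 < n) : p ^ 2 < Nat.card C := by
  have hmul : p ^ 2 * p < Nat.card C * p := by
    rw [← pow_succ, ← hC, C.card_mul_index, hG, hC]
    exact Nat.pow_lt_pow_right hp hn
  exact Nat.lt_of_mul_lt_mul_right hmul

theorem card_upperCentralSeries_two_eq_card_inf [Finite G] {C : Subgroup G} [C.Normal]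
    [IsMulCommutative C] (hco : IsCoatom C) (hlt : Nat.card (Subgroup.center G) ^ 2 < Nat.card C) :
    Nat.card (Subgroup.upperCentralSeries G 2) =
      Nat.card (C ⊓ Subgroup.upperCentralSeries G 2 : Subgroup G) := by
  rw [inf_eq_right.mpr]
  by_contra hle
  exact hlt.not_ge (card_le_sq_card_center_of_not_upperCentralSeries_two_le hco hle)

theorem isInducedFrom_iff_eq [Fintype G] [Group.IsNilpotent G] {χ : G → ℂ} {C H M : Subgroup G}
    (hind : IsInducedFrom χ C) (hC : IsCoatom C) (hM : IsCoatom M)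
    (hlt : Nat.card H < Nat.card C) (hzeros : {g | χ g = 0} ⊆ (C : Set G)ᶜ ∪ H) :
    IsInducedFrom χ M ↔ M = C := by
  refine ⟨?_, fun h => h ▸ hind⟩
  rintro ⟨θ, -, rfl⟩
  have : M.Normal := Subgroup.NormalizerCondition.normal_of_coatom M
    Group.normalizerCondition_of_isNilpotent hM
  have hsub : (C : Set G) ⊆ H ∪ M := fun x hx =>
    or_iff_not_imp_right.mpr fun hxM =>
      (hzeros (inducedCharacter_eq_zero θ hxM)).resolve_left fun hxC => hxC hx
  have hle : C ≤ M :=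
    (SubgroupClass.subset_union.mp hsub).resolve_left fun h => hlt.not_ge (Subgroup.card_le_of_le h)
  exact (hC.le_iff.mp hle).resolve_left hM.1

variable {V : Type*} [AddCommGroup V] [Module ℂ V] [FiniteDimensional ℂ V]
  {ρ : Representation ℂ G V} [ρ.IsIrreducible] {g : G} [(Subgroup.centralizer {g}).Normal]
  [IsMulCommutative (Subgroup.centralizer {g})]

theorem character_one_eq_index_centralizer (hρ : Function.Injective ρ)
    (hg₂ : g ∈ Subgroup.upperCentralSeries G 2) :
    ρ.character 1 = (Subgroup.centralizer {g}).index := by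
  obtain ⟨-, b, -⟩ := exists_basis_forall_apply_eq_smul hρ hg₂
  rw [ρ.char_one, Module.finrank_eq_nat_card_basis b, Subgroup.index]

theorem isInducedFrom_centralizer [Fintype G] (hρ : Function.Injective ρ)
    (hg₂ : g ∈ Subgroup.upperCentralSeries G 2) :
    IsInducedFrom ρ.character (Subgroup.centralizer {g}) := by
  obtain ⟨θ, b, hb⟩ := exists_basis_forall_apply_eq_smul hρ hg₂
  refine ⟨θ, isComplexCharacter_of_monoidHom θ, funext fun u => ?_⟩
  by_cases hu : u ∈ Subgroup.centralizer {g}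
  · have hconj (x : G) : x⁻¹ * u * x ∈ Subgroup.centralizer {g} := by
      simpa using Subgroup.Normal.conj_mem ‹_› u hu x⁻¹
    let _ : Fintype (G ⧸ Subgroup.centralizer {g}) := Fintype.ofFinite _
    rw [inducedCharacter_eq_sum θ hconj]
    exact (trace_eq_sum_of_forall_eq_smul b fun q => hb q u (hconj _)).symm
  · rw [inducedCharacter_eq_zero _ hu]
    exact (compl_centralizer_union_sdiff_subset_characterZeros hρ hg₂ (Or.inl hu)).symm

end Extremal

/-- Let `G` be a `p`-group of order `p ^ n` and let `χ` be a non-linear irreducible complex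
character of `G`. Then `χ` has at least `p^n - p^(n-1) + p^2 - p` zeros. If equality holds, then
`χ` is faithful of degree `p`, `|Z(G)| = p`, `G` has maximal class, `|Z₂(G)| = p²` if `n > 3`, and
`G` has an abelian subgroup `U` of index `p` such that the set of zeros of `χ` is
`(G - U) ∪ (Z₂(G) - Z(G))` and, if `n > 3`, `U` is the unique maximal subgroup of `G` with a
character that induces `χ`. -/
theorem stmt7 {G : Type*} [Group G] [Fintype G] {p n : ℕ} (hp : p.Prime)
    (hG : Nat.card G = p ^ n) (χ : G → ℂ) (hχ : IsIrrCharacter χ) (hnl : χ 1 ≠ 1) :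
    p ^ n - p ^ (n - 1) + (p ^ 2 - p) ≤ {g : G | χ g = 0}.ncard ∧
    ({g : G | χ g = 0}.ncard = p ^ n - p ^ (n - 1) + (p ^ 2 - p) →
      IsFaithfulCharacter χ ∧
      χ 1 = (p : ℂ) ∧
      Nat.card (Subgroup.center G) = p ∧
      HasMaximalClass G n ∧
      (3 < n → Nat.card (Subgroup.upperCentralSeries G 2) = p ^ 2) ∧
      ∃ U : Subgroup G, U.index = p ∧ (∀ x ∈ U, ∀ y ∈ U, x * y = y * x) ∧
        {g : G | χ g = 0} =
          (U : Set G)ᶜ ∪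
            ((Subgroup.upperCentralSeries G 2 : Set G) \ (Subgroup.center G : Set G)) ∧
        (3 < n → ∀ M : Subgroup G, IsCoatom M → (IsInducedFrom χ M ↔ M = U))) := by
  have : Fact p.Prime := ⟨hp⟩
  obtain ⟨V, hV, rfl⟩ := hχ
  have := isIrreducible_of_simple V
  have hpG : IsPGroup p G := IsPGroup.of_card hG
  have hdim : Module.finrank ℂ V ≠ 1 := fun h => hnl (by rw [FDRep.char_one, h, Nat.cast_one])
  rw [← card_div_eq_pow_sub_one V.ρ hp.pos hG hdim, ← hG]
  refine ⟨le_ncard_characterZeros hpG hdim, fun hcount => ?_⟩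
  have hzeros : (characterZeros V.ρ).ncard ≤ Nat.card G - Nat.card G / p + (p ^ 2 - p) := hcount.le
  have hρ := injective_of_ncard_characterZeros_le hpG hdim hzeros
  obtain ⟨g, hg₂, hg, hC⟩ := exists_index_centralizer_eq hpG hρ hdim
  obtain ⟨hZ, hH⟩ := card_center_eq_and_card_centralizer_inf_eq hpG hρ hzeros hg₂ hg hC
  have hset := characterZeros_eq_compl_centralizer_union_sdiff hpG hρ hzeros hg₂ hg hC
  have hcomm := isMulCommutative_centralizer_of_ncard_characterZeros_le hpG hρ hzeros hg₂ hg hC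
  have := normal_of_index_eq hpG hC
  have := hpG.isNilpotent
  have hco := isCoatom_of_prime_index (hC ▸ hp)
  have hn : 2 ≤ n := (Nat.pow_dvd_pow_iff_le_right hp.one_lt).mp
    (hG ▸ hH ▸ Subgroup.card_subgroup_dvd_card _)
  have hlt := sq_lt_card_of_index_eq hp.one_lt hG hC
  have hZ₂ (hn₃ : 3 < n) : Nat.card (Subgroup.upperCentralSeries G 2) = p ^ 2 :=
    (card_upperCentralSeries_two_eq_card_inf hco (hZ.symm ▸ hlt hn₃)).trans hH
  exact ⟨isFaithfulCharacter_of_injective hρ, hC ▸ character_one_eq_index_centralizer hρ hg₂, hZ,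
    hasMaximalClass_of_isMulCommutative_of_index_eq hG hn hC hZ, hZ₂,
    Subgroup.centralizer {g}, hC, fun x hx y hy => setLike_mul_comm hx hy, hset,
    fun hn₃ M hM => isInducedFrom_iff_eq (isInducedFrom_centralizer hρ hg₂) hco hM
      ((hZ₂ hn₃).trans_lt (hlt hn₃))
      (hset.subset.trans (Set.union_subset_union_right _ Set.sdiff_subset))⟩
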